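/- Let W be a conformal map on a domain Ω ∋ 0 with W(0) = 0. There exist constants C₁ > 0 and c < 0 depending only on Ω and W such that for every ℂ-hull K with {0} ⊊ K ⊂ Ω and cap(K) ≤ c, one has |cap(W(K)) − cap(K) − log|W'(0)|| ≤ C₁ e^{cap(K)/2}. -/

import Mathlib

open Filter Set Topology

/-- `K` is a `ℂ`-hull: a connected compact subset of `ℂ` with connected complement. -/
def IsCHull (K : Set ℂ) : Prop :=
  IsCompact K ∧ IsConnected K ∧ IsConnected Kᶜ

/-- `g` is the normalized Riemann map `g_K` from the complement of the hull `K` onto the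
exterior of the closed unit disc, fixing `∞`, with `g_K'(∞) = lim_{z→∞} z / g(z) = exp cap`,
where `cap = cap(K)` is the whole-plane capacity of `K`. -/
def IsWholePlaneCapacityMap (K : Set ℂ) (g : ℂ → ℂ) (cap : ℝ) : Prop :=
  DifferentiableOn ℂ g Kᶜ ∧ InjOn g Kᶜ ∧ g '' Kᶜ = {z : ℂ | 1 < ‖z‖} ∧
    Tendsto (fun z : ℂ => z / g z) (Bornology.cobounded ℂ) (𝓝 (Real.exp cap))

/-!
Write `r` for the exponential of the capacity of `K`. Read at infinity in the coordinate `1 / z`,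
the inverses of the capacity maps of `K` and `W '' K` are univalent maps of the unit disc fixing
`0`, and `V = g_{W(K)} ∘ W ∘ g_K⁻¹` becomes a map near the unit circle with `|V z| → 1` as
`|z| → 1`. Factoring each of these two univalent maps and `W` as its linear part times the
exponential of a distortion logarithm gives `log |V z| - log |z| = D + Re b z`, where
`D = cap (W(K)) - cap K - log |W' 0|` and `b` is holomorphic on `√r ≤ |z| < 1`. The left side
vanishes at the unit circle, so the mean of `Re b` over every circle `|z| = s` is `-D`, and `|D|` is
at most the supremum of `|b|` on `|z| = √r`. There Koebe-type estimates bound the points at which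
the three distortion logarithms are evaluated, hence `b` itself, by a multiple of `√r`.
-/

open Function Metric

/-! ### Univalent functions -/

section Univalent

variable {f : ℂ → ℂ} {U : Set ℂ} {u : ℂ}

lemma not_eventually_eq_of_injOn {α β : Type*} [TopologicalSpace α] {f : α → β} {U : Set α} {u : α}
    [(𝓝[≠] u).NeBot] (hU : U ∈ 𝓝 u) (hinj : InjOn f U) : ¬∀ᶠ z in 𝓝 u, f z = f u := by
  intro h
  have hne : ∀ᶠ z in 𝓝[≠] u, z = u := by
    filter_upwards [nhdsWithin_le_nhds h, nhdsWithin_le_nhds hU] with z hz hzU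
    exact hinj hzU (mem_of_mem_nhds hU) hz
  obtain ⟨z, hz, hz'⟩ := (hne.and self_mem_nhdsWithin).exists
  exact hz' hz

lemma map_nhds_eq_of_injOn (hU : IsOpen U) (hf : DifferentiableOn ℂ f U) (hinj : InjOn f U)
    (hu : u ∈ U) : map f (𝓝 u) = 𝓝 (f u) :=
  le_antisymm (hf.differentiableAt (hU.mem_nhds hu)).continuousAt <|
    (hf.analyticAt (hU.mem_nhds hu)).eventually_constant_or_nhds_le_map_nhds.resolve_left
      (not_eventually_eq_of_injOn (hU.mem_nhds hu) hinj)

lemma eventually_deriv_ne_zero_of_injOn (hU : IsOpen U) (hf : DifferentiableOn ℂ f U)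
    (hinj : InjOn f U) (hu : u ∈ U) : ∀ᶠ z in 𝓝[≠] u, deriv f z ≠ 0 := by
  have hf' := (hf.analyticAt (hU.mem_nhds hu)).deriv
  refine hf'.eventually_eq_zero_or_eventually_ne_zero.resolve_left fun hd =>
    not_eventually_eq_of_injOn (hU.mem_nhds hu) hinj ?_
  obtain ⟨ε, hε, hball⟩ := eventually_nhds_iff_ball.1 (hd.and (hU.mem_nhds hu))
  filter_upwards [ball_mem_nhds u hε] with z hz
  exact isOpen_ball.is_const_of_deriv_eq_zero (convex_ball u ε).isPreconnected
    (hf.mono fun w hw => (hball w hw).2) (fun w hw => (hball w hw).1) hz (mem_ball_self hε)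

lemma tendsto_invFunOn_nhds (hU : IsOpen U) (hf : DifferentiableOn ℂ f U) (hinj : InjOn f U)
    (hu : u ∈ U) : Tendsto (invFunOn f U) (𝓝 (f u)) (𝓝 u) := by
  rw [← map_nhds_eq_of_injOn hU hf hinj hu, tendsto_map'_iff]
  refine tendsto_id.congr' ?_
  filter_upwards [hU.mem_nhds hu] with z hz using (hinj.leftInvOn_invFunOn hz).symm

lemma isOpen_image_of_injOn (hU : IsOpen U) (hf : DifferentiableOn ℂ f U) (hinj : InjOn f U) :
    IsOpen (f '' U) := by
  rw [isOpen_iff_mem_nhds]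
  rintro _ ⟨u, hu, rfl⟩
  rw [← map_nhds_eq_of_injOn hU hf hinj hu]
  exact image_mem_map (hU.mem_nhds hu)

lemma hasDerivAt_invFunOn_of_deriv_ne_zero (hU : IsOpen U) (hf : DifferentiableOn ℂ f U)
    (hinj : InjOn f U) (hu : u ∈ U) (hd : deriv f u ≠ 0) :
    HasDerivAt (invFunOn f U) (deriv f u)⁻¹ (f u) := by
  have hinv : invFunOn f U (f u) = u := hinj.leftInvOn_invFunOn hu
  refine HasDerivAt.of_local_left_inverse (f := f) ?_ ?_ hd ?_
  · exact (tendsto_invFunOn_nhds hU hf hinj hu).trans_eq (by rw [hinv])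
  · rw [hinv]
    exact (hf.differentiableAt (hU.mem_nhds hu)).hasDerivAt
  · filter_upwards [(isOpen_image_of_injOn hU hf hinj).mem_nhds (mem_image_of_mem f hu)] with y hy
    exact invFunOn_eq hy

lemma differentiableAt_invFunOn (hU : IsOpen U) (hf : DifferentiableOn ℂ f U) (hinj : InjOn f U)
    (hu : u ∈ U) : DifferentiableAt ℂ (invFunOn f U) (f u) := by
  have hinv : invFunOn f U (f u) = u := hinj.leftInvOn_invFunOn hu
  have htend := tendsto_invFunOn_nhds hU hf hinj hu
  refine (Complex.analyticAt_of_differentiable_on_punctured_nhds_of_continuousAt ?_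
    (htend.trans_eq (by rw [hinv]))).differentiableAt
  have hd : ∀ᶠ y in 𝓝 (f u), invFunOn f U y ≠ u → deriv f (invFunOn f U y) ≠ 0 :=
    htend.eventually (eventually_nhdsWithin_iff.1
      (eventually_deriv_ne_zero_of_injOn hU hf hinj hu))
  rw [eventually_nhdsWithin_iff]
  filter_upwards [hd, (isOpen_image_of_injOn hU hf hinj).mem_nhds (mem_image_of_mem f hu)]
  rintro _ hd' ⟨w, hw, rfl⟩ hne
  rw [hinj.leftInvOn_invFunOn hw] at hd'
  exact (hasDerivAt_invFunOn_of_deriv_ne_zero hU hf hinj hw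
    (hd' fun h => hne (congrArg f h))).differentiableAt

lemma deriv_ne_zero_of_injOn (hU : IsOpen U) (hf : DifferentiableOn ℂ f U) (hinj : InjOn f U)
    (hu : u ∈ U) : deriv f u ≠ 0 := by
  intro hd
  have hcomp : HasDerivAt (invFunOn f U ∘ f) (deriv (invFunOn f U) (f u) * deriv f u) u :=
    (differentiableAt_invFunOn hU hf hinj hu).hasDerivAt.comp u
      (hf.differentiableAt (hU.mem_nhds hu)).hasDerivAt
  have hid : HasDerivAt (invFunOn f U ∘ f) 1 u := by
    refine (hasDerivAt_id u).congr_of_eventuallyEq ?_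
    filter_upwards [hU.mem_nhds hu] with z hz using hinj.leftInvOn_invFunOn hz
  simpa [hd] using hcomp.unique hid

lemma hasDerivAt_invFunOn (hU : IsOpen U) (hf : DifferentiableOn ℂ f U) (hinj : InjOn f U)
    (hu : u ∈ U) : HasDerivAt (invFunOn f U) (deriv f u)⁻¹ (f u) :=
  hasDerivAt_invFunOn_of_deriv_ne_zero hU hf hinj hu (deriv_ne_zero_of_injOn hU hf hinj hu)

lemma differentiableOn_invFunOn (hU : IsOpen U) (hf : DifferentiableOn ℂ f U) (hinj : InjOn f U) :
    DifferentiableOn ℂ (invFunOn f U) (f '' U) := by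
  rintro _ ⟨u, hu, rfl⟩
  exact (differentiableAt_invFunOn hU hf hinj hu).differentiableWithinAt

end Univalent

/-! ### Holomorphic logarithms -/

lemma exists_log_of_ne_zero_on_ball {f : ℂ → ℂ} {c : ℂ} {R : ℝ}
    (hf : DifferentiableOn ℂ f (ball c R)) (hf0 : ∀ z ∈ ball c R, f z ≠ 0) :
    ∃ l : ℂ → ℂ, l c = 0 ∧ (∀ z ∈ ball c R, HasDerivAt l (logDeriv f z) z) ∧
      ∀ z ∈ ball c R, f z = f c * Complex.exp (l z) := by
  have hlog : DifferentiableOn ℂ (logDeriv f) (ball c R) := (hf.deriv isOpen_ball).div hf hf0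
  obtain ⟨l, hlc, hl⟩ := hlog.isExactOn_ball.with_val_at c 0
  refine ⟨l, hlc, hl, fun z hz => ?_⟩
  have hderiv : ∀ w ∈ ball c R, HasDerivAt (fun w => f w * Complex.exp (-l w)) 0 w := by
    intro w hw
    have hfw := (hf.differentiableAt (isOpen_ball.mem_nhds hw)).hasDerivAt
    refine (hfw.mul (hl w hw).neg.cexp).congr_deriv ?_
    rw [logDeriv_apply]
    field_simp [hf0 w hw]
    ring
  have hconst := isOpen_ball.is_const_of_deriv_eq_zero (convex_ball c R).isPreconnected
    (fun w hw => (hderiv w hw).differentiableAt.differentiableWithinAt)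
    (fun w hw => (hderiv w hw).deriv) hz (mem_ball_self (pos_of_mem_ball hz))
  rw [hlc, neg_zero, Complex.exp_zero, mul_one] at hconst
  rw [← hconst, mul_assoc, ← Complex.exp_add, neg_add_cancel, Complex.exp_zero, mul_one]

/-! ### Bloch's theorem -/

lemma exists_ball_norm_le_two_mul_norm {E F : Type*} [PseudoMetricSpace E] [ProperSpace E]
    [SeminormedAddGroup F] {g : E → F} {c : E} {R : ℝ} (hR : 0 ≤ R)
    (hg : ContinuousOn g (closedBall c R)) :
    ∃ z s, ball z s ⊆ closedBall c R ∧ ‖g c‖ * R ≤ 2 * (‖g z‖ * s) ∧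
      ∀ w ∈ ball z s, ‖g w‖ ≤ 2 * ‖g z‖ := by
  have hcont : ContinuousOn (fun z => ‖g z‖ * (R - dist z c)) (closedBall c R) :=
    hg.norm.mul (by fun_prop)
  obtain ⟨z, -, hmax⟩ := (isCompact_closedBall c R).exists_isMaxOn
    ⟨c, mem_closedBall_self hR⟩ hcont
  have hdist : ∀ w ∈ ball z ((R - dist z c) / 2), (R - dist z c) / 2 ≤ R - dist w c := by
    intro w hw
    linarith [dist_triangle w z c, mem_ball.1 hw]
  have hsub : ball z ((R - dist z c) / 2) ⊆ closedBall c R := by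
    intro w hw
    rw [mem_closedBall]
    linarith [hdist w hw, pos_of_mem_ball hw]
  refine ⟨z, (R - dist z c) / 2, hsub, ?_, fun w hw => ?_⟩
  · calc ‖g c‖ * R ≤ ‖g z‖ * (R - dist z c) := by simpa using hmax (mem_closedBall_self hR)
      _ = 2 * (‖g z‖ * ((R - dist z c) / 2)) := by ring
  · refine le_of_mul_le_mul_right ?_ (pos_of_mem_ball hw)
    calc ‖g w‖ * ((R - dist z c) / 2) ≤ ‖g w‖ * (R - dist w c) := by gcongr; exact hdist w hw
      _ ≤ ‖g z‖ * (R - dist z c) := hmax (hsub hw)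
      _ = 2 * ‖g z‖ * ((R - dist z c) / 2) := by ring

section Bloch

variable {f : ℂ → ℂ} {c : ℂ}

lemma ball_subset_image_closedBall_of_norm_deriv_sub_le {ρ : ℝ}
    (hf : ∀ w ∈ closedBall c ρ, DifferentiableAt ℂ f w)
    (hd : ∀ w ∈ closedBall c ρ, ‖deriv f w - deriv f c‖ ≤ ‖deriv f c‖ / 2) :
    ball (f c) (‖deriv f c‖ * ρ / 4) ⊆ f '' closedBall c ρ := by
  rcases le_or_gt (‖deriv f c‖ * ρ / 4) 0 with h | hpos
  · simp [ball_eq_empty.2 h]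
  have hfc : deriv f c ≠ 0 := by rintro h; simp [h] at hpos
  have hρ : 0 < ρ := pos_of_mul_pos_right (a := ‖deriv f c‖) (by linarith) (norm_nonneg _)
  have hc : c ∈ closedBall c ρ := mem_closedBall_self hρ.le
  have hlin : ∀ w ∈ closedBall c ρ,
      ‖f w - f c - deriv f c * (w - c)‖ ≤ ‖deriv f c‖ / 2 * ‖w - c‖ := by
    intro w hw
    calc ‖f w - f c - deriv f c * (w - c)‖
        = ‖(f w - deriv f c * w) - (f c - deriv f c * c)‖ := by congr 1; ring
      _ ≤ ‖deriv f c‖ / 2 * ‖w - c‖ :=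
        (convex_closedBall c ρ).norm_image_sub_le_of_norm_hasDerivWithin_le
          (f := fun z => f z - deriv f c * z) (f' := fun z => deriv f z - deriv f c * 1)
          (fun x hx =>
            ((hf x hx).hasDerivAt.sub ((hasDerivAt_id x).const_mul _)).hasDerivWithinAt)
          (fun x hx => by simpa using hd x hx) hc hw
  have hsphere : ∀ w ∈ sphere c ρ, ‖deriv f c‖ * ρ / 2 ≤ ‖f w - f c‖ := by
    intro w hw
    have hle := hlin w (sphere_subset_closedBall hw)
    have htri := norm_sub_norm_le (deriv f c * (w - c)) (f w - f c)
    rw [norm_sub_rev _ (f w - f c), norm_mul, mem_sphere_iff_norm.1 hw] at htri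
    rw [mem_sphere_iff_norm.1 hw] at hle
    linarith
  have hfreq : ∃ᶠ z in 𝓝 c, f z ≠ f c := by
    intro h
    exact hfc <| (EventuallyEq.deriv_eq (f := fun _ => f c)
      (h.mono fun z hz => not_not.1 hz)).trans (deriv_const c _)
  have hdiff : DiffContOnCl ℂ f (ball c ρ) :=
    DifferentiableOn.diffContOnCl fun w hw =>
      (hf w (closure_ball_subset_closedBall hw)).differentiableWithinAt
  refine Subset.trans (ball_subset_ball (le_of_eq ?_))
    (hdiff.ball_subset_image_closedBall hρ hsphere hfreq)
  ring

lemma ball_subset_image_of_norm_deriv_le_two_mul {s : ℝ} (hf : DifferentiableOn ℂ f (ball c s))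
    (hd : ∀ w ∈ ball c s, ‖deriv f w‖ ≤ 2 * ‖deriv f c‖) :
    ball (f c) (‖deriv f c‖ * s / 24) ⊆ f '' ball c s := by
  rcases le_or_gt s 0 with hs | hs
  · rw [ball_eq_empty.2 (by nlinarith [norm_nonneg (deriv f c)])]
    exact empty_subset _
  have hsub : closedBall c (s / 6) ⊆ ball c s := closedBall_subset_ball (by linarith)
  have hmaps : MapsTo (deriv f) (ball c s) (closedBall (deriv f c) (3 * ‖deriv f c‖)) := by
    intro w hw
    rw [mem_closedBall, dist_eq_norm]
    linarith [norm_sub_le (deriv f w) (deriv f c), hd w hw]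
  have hschwarz : ∀ w ∈ closedBall c (s / 6), ‖deriv f w - deriv f c‖ ≤ ‖deriv f c‖ / 2 := by
    intro w hw
    calc ‖deriv f w - deriv f c‖ ≤ 3 * ‖deriv f c‖ / s * dist w c := by
          simpa only [dist_eq_norm] using Complex.dist_le_div_mul_dist_of_mapsTo_ball
            (hf.deriv isOpen_ball) hmaps (hsub hw)
      _ ≤ 3 * ‖deriv f c‖ / s * (s / 6) := by gcongr; exact hw
      _ = ‖deriv f c‖ / 2 := by field_simp; ring
  refine Subset.trans (ball_subset_ball (le_of_eq ?_)) <|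
    (ball_subset_image_closedBall_of_norm_deriv_sub_le
      (fun w hw => hf.differentiableAt (isOpen_ball.mem_nhds (hsub hw))) hschwarz).trans
    (image_mono hsub)
  ring

theorem exists_ball_subset_image_of_lt_norm_deriv_mul {R B : ℝ}
    (hf : DifferentiableOn ℂ f (ball c R)) (hB : B < ‖deriv f c‖ * R / 48) :
    ∃ w, ball w B ⊆ f '' ball c R := by
  rcases le_or_gt B 0 with hB0 | hB0
  · exact ⟨0, by simp [ball_eq_empty.2 hB0]⟩
  have hd : 0 < ‖deriv f c‖ := by
    refine (norm_nonneg _).lt_of_ne fun h => ?_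
    rw [← h] at hB
    linarith
  have hsub : closedBall c (48 * B / ‖deriv f c‖) ⊆ ball c R :=
    closedBall_subset_ball (by rw [div_lt_iff₀ hd]; linarith)
  obtain ⟨z, s, hzs, hs, hle⟩ := exists_ball_norm_le_two_mul_norm (by positivity)
    ((hf.deriv isOpen_ball).continuousOn.mono hsub)
  rw [mul_div_cancel₀ _ hd.ne'] at hs
  refine ⟨f z, (ball_subset_ball ?_).trans <|
    (ball_subset_image_of_norm_deriv_le_two_mul (hf.mono (hzs.trans hsub)) hle).trans
    (image_mono (hzs.trans hsub))⟩
  linarith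

end Bloch

/-! ### Koebe estimates -/

section Koebe

variable {f : ℂ → ℂ} {c : ℂ} {R : ℝ}

-- A logarithm of `f` is injective modulo `2πi`, so its image contains no disc of radius `4 > π`.
theorem norm_deriv_mul_le_of_injOn_of_ne_zero (hf : DifferentiableOn ℂ f (ball c R))
    (hinj : InjOn f (ball c R)) (hf0 : ∀ z ∈ ball c R, f z ≠ 0) :
    ‖deriv f c‖ * R ≤ 192 * ‖f c‖ := by
  by_contra! hlt
  have hc : c ∈ ball c R := mem_ball_self <|
    pos_of_mul_pos_right ((by positivity : 0 ≤ 192 * ‖f c‖).trans_lt hlt) (norm_nonneg _)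
  obtain ⟨l, -, hl, hfl⟩ := exists_log_of_ne_zero_on_ball hf hf0
  have hbloch : 4 < ‖deriv l c‖ * R / 48 := by
    rw [(hl c hc).deriv, logDeriv_apply, norm_div, div_mul_eq_mul_div, div_div,
      lt_div_iff₀ (by have := norm_pos_iff.2 (hf0 c hc); positivity)]
    linarith
  obtain ⟨w, hw⟩ := exists_ball_subset_image_of_lt_norm_deriv_mul
    (fun z hz => (hl z hz).differentiableAt.differentiableWithinAt) hbloch
  have hpi : ‖(Real.pi : ℂ) * Complex.I‖ < 4 := by
    simpa [abs_of_pos Real.pi_pos] using Real.pi_lt_four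
  obtain ⟨a, ha, hla⟩ := hw (a := w + Real.pi * Complex.I) (by simpa using hpi)
  obtain ⟨b, hb, hlb⟩ := hw (a := w - Real.pi * Complex.I) (by simpa using hpi)
  have hab : l a = l b + 2 * Real.pi * Complex.I := by rw [hla, hlb]; ring
  have hfab : f a = f b := by
    rw [hfl a ha, hfl b hb, hab, Complex.exp_add, Complex.exp_two_pi_mul_I, mul_one]
  rw [hinj ha hb hfab, left_eq_add] at hab
  exact Complex.two_pi_I_ne_zero hab

theorem ball_subset_image_of_injOn (hf : DifferentiableOn ℂ f (ball c R))
    (hinj : InjOn f (ball c R)) : ball (f c) (‖deriv f c‖ * R / 192) ⊆ f '' ball c R := by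
  intro w hw
  by_contra hwf
  have hle := norm_deriv_mul_le_of_injOn_of_ne_zero (f := fun z => f z - w) (hf.sub_const w)
    (fun a ha b hb hab => hinj ha hb (sub_left_injective hab))
    (fun z hz h => hwf ⟨z, hz, sub_eq_zero.1 h⟩)
  rw [deriv_sub_const, ← dist_eq_norm, dist_comm] at hle
  linarith [mem_ball.1 hw]

theorem norm_deriv_mul_dist_le_of_injOn (hf : DifferentiableOn ℂ f (ball c R))
    (hinj : InjOn f (ball c R)) {z : ℂ} (hz : z ∈ ball c R) :
    ‖deriv f c‖ * dist z c ≤ 192 * dist (f z) (f c) := by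
  have hR : 0 < R := pos_of_mem_ball hz
  have hc : c ∈ ball c R := mem_ball_self hR
  have hd : 0 < ‖deriv f c‖ := norm_pos_iff.2 (deriv_ne_zero_of_injOn isOpen_ball hf hinj hc)
  rcases lt_or_ge (dist (f z) (f c)) (‖deriv f c‖ * R / 192) with hnear | hfar
  · have hkoebe := ball_subset_image_of_injOn hf hinj
    have hinv : ∀ w ∈ ball c R, invFunOn f (ball c R) (f w) = w :=
      fun w hw => hinj.leftInvOn_invFunOn hw
    have hmaps : MapsTo (invFunOn f (ball c R)) (ball (f c) (‖deriv f c‖ * R / 192))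
        (closedBall (invFunOn f (ball c R) (f c)) R) := by
      intro w hw
      rw [hinv c hc]
      exact ball_subset_closedBall (invFunOn_mem (hkoebe hw))
    have hschwarz := Complex.dist_le_div_mul_dist_of_mapsTo_ball
      ((differentiableOn_invFunOn isOpen_ball hf hinj).mono hkoebe) hmaps (mem_ball.2 hnear)
    rw [hinv z hz, hinv c hc] at hschwarz
    calc ‖deriv f c‖ * dist z c
        ≤ ‖deriv f c‖ * (R / (‖deriv f c‖ * R / 192) * dist (f z) (f c)) := by gcongr
      _ = 192 * dist (f z) (f c) := by field_simp
  · calc ‖deriv f c‖ * dist z c ≤ ‖deriv f c‖ * R := by gcongr; exact (mem_ball.1 hz).le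
      _ ≤ 192 * dist (f z) (f c) := by linarith

lemma norm_inv_le_of_injOn (hf : DifferentiableOn ℂ f (ball 0 R)) (hinj : InjOn f (ball 0 R))
    (hf0 : f 0 = 0) {z : ℂ} (hz : z ∈ ball 0 R) : ‖(f z)⁻¹‖ ≤ 192 / (‖deriv f 0‖ * ‖z‖) := by
  rcases eq_or_ne z 0 with rfl | hz0
  · simp [hf0]
  have hd : deriv f 0 ≠ 0 :=
    deriv_ne_zero_of_injOn isOpen_ball hf hinj (mem_ball_self (pos_of_mem_ball hz))
  have hle := norm_deriv_mul_dist_le_of_injOn hf hinj hz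
  rw [hf0, dist_zero_right, dist_zero_right] at hle
  have hpos : 0 < ‖deriv f 0‖ * ‖z‖ := by positivity
  rw [norm_inv, inv_le_comm₀ (by linarith) (by positivity), inv_div, div_le_iff₀ (by norm_num)]
  linarith

end Koebe

/-! ### The distortion logarithm -/

/-- `l` is the branch vanishing at `0` of `log (f z / (f' 0 * z))` on the disc of radius `R`; it
measures how far `f` is from its linearization at the fixed point `0`. -/
structure IsDistortionLog (f l : ℂ → ℂ) (R : ℝ) : Prop where
  differentiableOn : DifferentiableOn ℂ l (ball 0 R)
  map_zero : l 0 = 0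
  eq_mul_exp : ∀ z ∈ ball 0 R, f z = deriv f 0 * z * Complex.exp (l z)

theorem exists_isDistortionLog {f : ℂ → ℂ} {R : ℝ} (hf : DifferentiableOn ℂ f (ball 0 R))
    (hinj : InjOn f (ball 0 R)) (hf0 : f 0 = 0) : ∃ l, IsDistortionLog f l R := by
  rcases le_or_gt R 0 with hR | hR
  · exact ⟨0, by simp [ball_eq_empty.2 hR], rfl, by simp [ball_eq_empty.2 hR]⟩
  have h0 : (0 : ℂ) ∈ ball 0 R := mem_ball_self hR
  have hmul : ∀ z, z * dslope f 0 z = f z := fun z => by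
    simpa [hf0] using sub_smul_dslope f 0 z
  have hne : ∀ z ∈ ball 0 R, dslope f 0 z ≠ 0 := by
    intro z hz h
    have hz0 : z = 0 := hinj hz h0 (by rw [← hmul z, h, mul_zero, hf0])
    rw [hz0, dslope_same] at h
    exact deriv_ne_zero_of_injOn isOpen_ball hf hinj h0 h
  obtain ⟨l, hl0, hl, hexp⟩ := exists_log_of_ne_zero_on_ball
    ((Complex.differentiableOn_dslope (isOpen_ball.mem_nhds h0)).2 hf) hne
  refine ⟨l, fun z hz => (hl z hz).differentiableAt.differentiableWithinAt, hl0, fun z hz => ?_⟩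
  rw [← hmul z, hexp z hz, dslope_same]
  ring

namespace IsDistortionLog

variable {f l : ℂ → ℂ} {R : ℝ} {z : ℂ}

lemma differentiableAt (hl : IsDistortionLog f l R) (hz : z ∈ ball 0 R) : DifferentiableAt ℂ l z :=
  hl.differentiableOn.differentiableAt (isOpen_ball.mem_nhds hz)

lemma deriv_mul_eq (hl : IsDistortionLog f l R) (hz : z ∈ ball 0 R) :
    deriv f z * z = (1 + z * deriv l z) * f z := by
  have hderiv : HasDerivAt f (deriv f 0 * 1 * Complex.exp (l z) +
      deriv f 0 * z * (Complex.exp (l z) * deriv l z)) z := by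
    refine (((hasDerivAt_id z).const_mul (deriv f 0)).mul
      (hl.differentiableAt hz).hasDerivAt.cexp).congr_of_eventuallyEq ?_
    filter_upwards [isOpen_ball.mem_nhds hz] with w hw using hl.eq_mul_exp w hw
  rw [hderiv.deriv, hl.eq_mul_exp z hz]
  ring

lemma norm_mul_deriv_le (hl : IsDistortionLog f l R) (hf : DifferentiableOn ℂ f (ball 0 R))
    (hinj : InjOn f (ball 0 R)) (hz : ‖z‖ ≤ R / 2) : ‖z * deriv l z‖ ≤ 193 := by
  rcases eq_or_ne z 0 with rfl | hz0
  · simp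
  have hzpos : 0 < ‖z‖ := norm_pos_iff.2 hz0
  have hzR : z ∈ ball 0 R := by rw [mem_ball_zero_iff]; linarith
  have h0R : (0 : ℂ) ∈ ball 0 R := mem_ball_self (pos_of_mem_ball hzR)
  have hf0 : f 0 = 0 := by simpa using hl.eq_mul_exp 0 h0R
  have hsub : ball z ‖z‖ ⊆ ball 0 R := ball_subset_ball' (by rw [dist_zero_right]; linarith)
  have hne : ∀ w ∈ ball 0 R, w ≠ 0 → f w ≠ 0 :=
    fun w hw hw0 h => hw0 (hinj hw h0R (h.trans hf0.symm))
  have hkoebe := norm_deriv_mul_le_of_injOn_of_ne_zero (hf.mono hsub) (hinj.mono hsub)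
    fun w hw => hne w (hsub hw) (by rintro rfl; simp at hw)
  rw [← norm_mul, hl.deriv_mul_eq hzR, norm_mul] at hkoebe
  have hone := le_of_mul_le_mul_right hkoebe (norm_pos_iff.2 (hne z hzR hz0))
  calc ‖z * deriv l z‖ = ‖(1 + z * deriv l z) - 1‖ := by rw [add_sub_cancel_left]
    _ ≤ ‖1 + z * deriv l z‖ + ‖(1 : ℂ)‖ := norm_sub_le _ _
    _ ≤ 193 := by rw [norm_one]; linarith

lemma norm_deriv_le (hl : IsDistortionLog f l R) (hf : DifferentiableOn ℂ f (ball 0 R))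
    (hinj : InjOn f (ball 0 R)) (hR : 0 < R) (hz : ‖z‖ ≤ R / 2) : ‖deriv l z‖ ≤ 386 / R := by
  have hsub : closedBall (0 : ℂ) (R / 2) ⊆ ball 0 R := closedBall_subset_ball (by linarith)
  refine Complex.norm_le_of_forall_mem_frontier_norm_le (U := ball (0 : ℂ) (R / 2)) isBounded_ball
    ((hl.differentiableOn.deriv isOpen_ball).diffContOnCl_ball hsub) (fun w hw => ?_) ?_
  · rw [frontier_ball _ (by positivity), mem_sphere_zero_iff_norm] at hw
    have hle := hl.norm_mul_deriv_le hf hinj hw.le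
    rw [norm_mul, hw] at hle
    rw [le_div_iff₀ hR]
    linarith
  · rwa [closure_ball _ (by positivity), mem_closedBall_zero_iff]

theorem norm_le (hl : IsDistortionLog f l R) (hf : DifferentiableOn ℂ f (ball 0 R))
    (hinj : InjOn f (ball 0 R)) (hR : 0 < R) (hz : ‖z‖ ≤ R / 2) : ‖l z‖ ≤ 386 / R * ‖z‖ := by
  have hmean := (convex_closedBall (0 : ℂ) (R / 2)).norm_image_sub_le_of_norm_deriv_le (f := l)
    (x := 0) (y := z)
    (fun w hw => hl.differentiableAt (closedBall_subset_ball (by linarith) hw))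
    (fun w hw => hl.norm_deriv_le hf hinj hR (mem_closedBall_zero_iff.1 hw))
    (mem_closedBall_self (by positivity)) (mem_closedBall_zero_iff.2 hz)
  simpa [hl.map_zero] using hmean

end IsDistortionLog

theorem norm_le_three_mul_norm_deriv_mul_norm_of_injOn {f : ℂ → ℂ} {R : ℝ} (hR : 0 < R)
    (hf : DifferentiableOn ℂ f (ball 0 R)) (hinj : InjOn f (ball 0 R)) (hf0 : f 0 = 0) {z : ℂ}
    (hz : ‖z‖ ≤ R / 386) : ‖f z‖ ≤ 3 * (‖deriv f 0‖ * ‖z‖) := by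
  obtain ⟨l, hl⟩ := exists_isDistortionLog hf hinj hf0
  have hre : (l z).re ≤ 1 :=
    calc (l z).re ≤ ‖l z‖ := Complex.re_le_norm _
      _ ≤ 386 / R * ‖z‖ := hl.norm_le hf hinj hR (by linarith)
      _ ≤ 386 / R * (R / 386) := by gcongr
      _ = 1 := by field_simp
  rw [hl.eq_mul_exp z (by rw [mem_ball_zero_iff]; linarith), norm_mul, norm_mul, Complex.norm_exp,
    mul_comm]
  gcongr
  exact (Real.exp_le_exp.2 hre).trans Real.exp_one_lt_three.le

/-! ### Mean values on an annulus -/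

section Annulus

variable {h : ℂ → ℂ} {r R : ℝ}

lemma circleAverage_eq_of_differentiableAt_annulus (hr : 0 < r) (hrR : r ≤ R)
    (hh : ∀ z, r ≤ ‖z‖ → ‖z‖ ≤ R → DifferentiableAt ℂ h z) :
    Real.circleAverage h 0 R = Real.circleAverage h 0 r := by
  rw [Real.circleAverage_eq_circleIntegral (hr.trans_le hrR).ne',
    Real.circleAverage_eq_circleIntegral hr.ne',
    Complex.circleIntegral_sub_center_inv_smul_eq_of_differentiable_on_annulus_off_countable hr hrR
      countable_empty]
  · intro z hz
    rw [Set.mem_sdiff, mem_closedBall_zero_iff, mem_ball_zero_iff, not_lt] at hz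
    exact (hh z hz.2 hz.1).continuousAt.continuousWithinAt
  · intro z hz
    simp only [sdiff_empty, Set.mem_sdiff, mem_closedBall_zero_iff, mem_ball_zero_iff, not_le] at hz
    exact hh z hz.2.le hz.1.le

lemma abs_circleAverage_sub_le {u : ℂ → ℝ} {c : ℂ} {L ε : ℝ} (hu : CircleIntegrable u c R)
    (hle : ∀ z ∈ sphere c |R|, |u z - L| ≤ ε) : |Real.circleAverage u c R - L| ≤ ε := by
  have hupper : Real.circleAverage u c R ≤ L + ε := by
    rw [← Real.circleAverage_const (L + ε) c R]
    exact Real.circleAverage_mono hu (circleIntegrable_const _ _ _)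
      fun z hz => by linarith [(abs_le.1 (hle z hz)).2]
  have hlower : L - ε ≤ Real.circleAverage u c R := by
    rw [← Real.circleAverage_const (L - ε) c R]
    exact Real.circleAverage_mono (circleIntegrable_const _ _ _) hu
      fun z hz => by linarith [(abs_le.1 (hle z hz)).1]
  exact abs_sub_le_iff.2 ⟨by linarith, by linarith⟩

lemma abs_re_circleAverage_sub_le {L ε : ℝ} (hR : 0 ≤ R)
    (hh : ∀ z, ‖z‖ = R → DifferentiableAt ℂ h z) (hle : ∀ z, ‖z‖ = R → |(h z).re - L| ≤ ε) :
    |(Real.circleAverage h 0 R).re - L| ≤ ε := by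
  have hcont : ContinuousOn h (sphere 0 R) := fun z hz =>
    (hh z (mem_sphere_zero_iff_norm.1 hz)).continuousAt.continuousWithinAt
  have hre := Complex.reCLM.circleAverage_comp_comm (hcont.circleIntegrable hR)
  rw [← Complex.reCLM_apply, ← hre]
  refine abs_circleAverage_sub_le
    ((Complex.continuous_re.comp_continuousOn hcont).circleIntegrable hR) fun z hz => ?_
  rw [abs_of_nonneg hR, mem_sphere_zero_iff_norm] at hz
  exact hle z hz

theorem abs_le_of_tendsto_re_of_differentiableAt_annulus {L M : ℝ} (hr : 0 < r) (hrR : r < R)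
    (hh : ∀ z, r ≤ ‖z‖ → ‖z‖ < R → DifferentiableAt ℂ h z) (hM : ∀ z, ‖z‖ = r → ‖h z‖ ≤ M)
    (hL : Tendsto (fun z => (h z).re) (comap norm (𝓝[<] R)) (𝓝 L)) : |L| ≤ M := by
  have hinner : |(Real.circleAverage h 0 r).re - 0| ≤ M :=
    abs_re_circleAverage_sub_le hr.le (fun z hz => hh z hz.ge (hz.trans_lt hrR)) fun z hz => by
      rw [sub_zero]
      exact (Complex.abs_re_le_norm _).trans (hM z hz)
  refine le_of_forall_pos_le_add fun ε hε => ?_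
  have hclose : ∀ᶠ s in 𝓝[<] R, ∀ z : ℂ, ‖z‖ = s → |(h z).re - L| ≤ ε :=
    eventually_comap.1 (hL.eventually (closedBall_mem_nhds L hε))
  obtain ⟨q, hq, hrq, hqR⟩ := (hclose.and (Ioo_mem_nhdsLT hrR)).exists
  have houter : |(Real.circleAverage h 0 q).re - L| ≤ ε :=
    abs_re_circleAverage_sub_le (hr.trans hrq).le
      (fun z hz => hh z (hz ▸ hrq.le) (hz.trans_lt hqR)) hq
  rw [circleAverage_eq_of_differentiableAt_annulus hr hrq.le
    fun z hz hzq => hh z hz (hzq.trans_lt hqR)] at houter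
  rw [sub_zero, abs_le] at hinner
  rw [abs_le] at houter ⊢
  constructor <;> linarith

end Annulus

/-! ### Whole-plane capacity maps -/

/-- The image of `ℂ̂ \ K` under `u ↦ u⁻¹`, with `∞` sent to `0`. The point `0` is inserted by hand
because `0⁻¹ = 0` here. -/
def invertedCompl (K : Set ℂ) : Set ℂ :=
  insert 0 {u | u⁻¹ ∉ K}

/-- The map `g` on the exterior of a hull read in the coordinate `u = 1 / z` at `∞`, in both the
source and the target. -/
noncomputable def invertedMap (g : ℂ → ℂ) : ℂ → ℂ :=
  update (fun u => (g u⁻¹)⁻¹) 0 0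

/-- The inverse of `invertedMap g`: for the capacity map `g` of `K`, the univalent map of the unit
disc onto `invertedCompl K` with `diskMap K g z = 1 / g⁻¹ (1 / z)`. -/
noncomputable def diskMap (K : Set ℂ) (g : ℂ → ℂ) : ℂ → ℂ :=
  invFunOn (invertedMap g) (invertedCompl K)

lemma zero_mem_invertedCompl (K : Set ℂ) : (0 : ℂ) ∈ invertedCompl K :=
  mem_insert 0 _

lemma mem_invertedCompl_of_ne {K : Set ℂ} {u : ℂ} (hu : u ≠ 0) : u ∈ invertedCompl K ↔ u⁻¹ ∉ K := by
  simp [invertedCompl, hu]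

lemma isOpen_invertedCompl {K : Set ℂ} (hK : IsCompact K) : IsOpen (invertedCompl K) := by
  rw [isOpen_iff_mem_nhds]
  intro u hu
  rcases eq_or_ne u 0 with rfl | hu0
  · exact insert_mem_nhds_iff.2 (tendsto_inv₀_nhdsNE_zero (Bornology.isBounded_def.1 hK.isBounded))
  · refine mem_of_superset ((continuousAt_inv₀ hu0) (hK.isClosed.isOpen_compl.mem_nhds
      ((mem_invertedCompl_of_ne hu0).1 hu))) (subset_insert _ _)

lemma isCompact_invertedCompl {v : Set ℂ} (hv : IsOpen v) (h0 : (0 : ℂ) ∈ v) :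
    IsCompact (invertedCompl v) := by
  have hcompl : (invertedCompl v)ᶜ = {0}ᶜ ∩ (fun u => u⁻¹) ⁻¹' v := by
    ext u
    simp [invertedCompl]
  refine isCompact_of_isClosed_isBounded (isOpen_compl_iff.1 ?_) ?_
  · rw [hcompl]
    exact continuousOn_inv₀.isOpen_inter_preimage isOpen_compl_singleton hv
  · have hcobdd := tendsto_inv₀_cobounded (hv.mem_nhds h0)
    rw [← Bornology.isCobounded_compl_iff, hcompl]
    exact inter_mem (Bornology.isBounded_def.1 Bornology.isBounded_singleton) hcobdd

@[simp] lemma invertedMap_zero (g : ℂ → ℂ) : invertedMap g 0 = 0 := by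
  simp [invertedMap]

lemma invertedMap_of_ne {g : ℂ → ℂ} {u : ℂ} (hu : u ≠ 0) : invertedMap g u = (g u⁻¹)⁻¹ := by
  simp [invertedMap, hu]

namespace IsWholePlaneCapacityMap

variable {K : Set ℂ} {g : ℂ → ℂ} {cap : ℝ} {u w z : ℂ}

lemma one_lt_norm (hg : IsWholePlaneCapacityMap K g cap) (hw : w ∉ K) : 1 < ‖g w‖ :=
  hg.2.2.1.subset (mem_image_of_mem g hw)

lemma map_ne_zero (hg : IsWholePlaneCapacityMap K g cap) (hw : w ∉ K) : g w ≠ 0 :=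
  norm_pos_iff.1 (one_pos.trans (hg.one_lt_norm hw))

lemma differentiableAt (hg : IsWholePlaneCapacityMap K g cap) (hK : IsClosed K) (hw : w ∉ K) :
    DifferentiableAt ℂ g w :=
  hg.1.differentiableAt (hK.isOpen_compl.mem_nhds hw)

lemma hasDerivAt_invertedMap_zero (hg : IsWholePlaneCapacityMap K g cap) :
    HasDerivAt (invertedMap g) (Real.exp cap) 0 := by
  rw [hasDerivAt_iff_tendsto_slope]
  refine (hg.2.2.2.comp tendsto_inv₀_nhdsNE_zero).congr' ?_
  filter_upwards [self_mem_nhdsWithin] with u (hu : u ≠ 0)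
  simp [slope_def_field, invertedMap_of_ne hu, div_eq_mul_inv, mul_comm]

lemma differentiableOn_invertedMap (hg : IsWholePlaneCapacityMap K g cap) (hK : IsClosed K) :
    DifferentiableOn ℂ (invertedMap g) (invertedCompl K) := by
  intro u hu
  refine DifferentiableAt.differentiableWithinAt ?_
  rcases eq_or_ne u 0 with rfl | hu0
  · exact hg.hasDerivAt_invertedMap_zero.differentiableAt
  · have hu' := (mem_invertedCompl_of_ne hu0).1 hu
    refine (((hg.differentiableAt hK hu').comp u (differentiableAt_inv hu0)).inv
      (hg.map_ne_zero hu')).congr_of_eventuallyEq ?_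
    filter_upwards [isOpen_ne.mem_nhds hu0] with v hv using invertedMap_of_ne hv

lemma invertedMap_ne_zero (hg : IsWholePlaneCapacityMap K g cap) (hu : u ∈ invertedCompl K)
    (hu0 : u ≠ 0) : invertedMap g u ≠ 0 := by
  rw [invertedMap_of_ne hu0]
  exact inv_ne_zero (hg.map_ne_zero ((mem_invertedCompl_of_ne hu0).1 hu))

lemma injOn_invertedMap (hg : IsWholePlaneCapacityMap K g cap) :
    InjOn (invertedMap g) (invertedCompl K) := by
  intro u hu v hv huv
  rcases eq_or_ne u 0 with rfl | hu0 <;> rcases eq_or_ne v 0 with rfl | hv0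
  · rfl
  · exact absurd (huv.symm.trans (invertedMap_zero g)) (hg.invertedMap_ne_zero hv hv0)
  · exact absurd (huv.trans (invertedMap_zero g)) (hg.invertedMap_ne_zero hu hu0)
  · rw [invertedMap_of_ne hu0, invertedMap_of_ne hv0] at huv
    exact inv_injective (hg.2.1 ((mem_invertedCompl_of_ne hu0).1 hu)
      ((mem_invertedCompl_of_ne hv0).1 hv) (inv_injective huv))

lemma image_invertedMap (hg : IsWholePlaneCapacityMap K g cap) (h0 : (0 : ℂ) ∈ K) :
    invertedMap g '' invertedCompl K = ball 0 1 := by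
  refine Subset.antisymm ?_ fun z hz => ?_
  · rintro _ ⟨u, hu, rfl⟩
    rcases eq_or_ne u 0 with rfl | hu0
    · simp
    · rw [invertedMap_of_ne hu0, mem_ball_zero_iff, norm_inv]
      exact inv_lt_one_of_one_lt₀ (hg.one_lt_norm ((mem_invertedCompl_of_ne hu0).1 hu))
  · rcases eq_or_ne z 0 with rfl | hz0
    · exact ⟨0, zero_mem_invertedCompl K, invertedMap_zero g⟩
    · have hz' : z⁻¹ ∈ g '' Kᶜ := by
        rw [hg.2.2.1, mem_ofPred_eq, norm_inv]
        exact (one_lt_inv₀ (norm_pos_iff.2 hz0)).2 (mem_ball_zero_iff.1 hz)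
      obtain ⟨w, hw, hwz⟩ := hz'
      have hw0 : w⁻¹ ≠ 0 := inv_ne_zero fun h => hw (h ▸ h0)
      refine ⟨w⁻¹, (mem_invertedCompl_of_ne hw0).2 (by rwa [inv_inv]), ?_⟩
      rw [invertedMap_of_ne hw0, inv_inv, hwz, inv_inv]

lemma diskMap_invertedMap (hg : IsWholePlaneCapacityMap K g cap) (hu : u ∈ invertedCompl K) :
    diskMap K g (invertedMap g u) = u :=
  hg.injOn_invertedMap.leftInvOn_invFunOn hu

lemma diskMap_mem (hg : IsWholePlaneCapacityMap K g cap) (h0 : (0 : ℂ) ∈ K) (hz : z ∈ ball 0 1) :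
    diskMap K g z ∈ invertedCompl K :=
  invFunOn_mem ((hg.image_invertedMap h0).superset hz)

lemma invertedMap_diskMap (hg : IsWholePlaneCapacityMap K g cap) (h0 : (0 : ℂ) ∈ K)
    (hz : z ∈ ball 0 1) : invertedMap g (diskMap K g z) = z :=
  invFunOn_eq ((hg.image_invertedMap h0).superset hz)

lemma diskMap_zero (hg : IsWholePlaneCapacityMap K g cap) : diskMap K g 0 = 0 := by
  simpa using hg.diskMap_invertedMap (zero_mem_invertedCompl K)

lemma injOn_diskMap (hg : IsWholePlaneCapacityMap K g cap) (h0 : (0 : ℂ) ∈ K) :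
    InjOn (diskMap K g) (ball 0 1) :=
  LeftInvOn.injOn (f₁' := invertedMap g) fun _ hz => hg.invertedMap_diskMap h0 hz

lemma diskMap_ne_zero (hg : IsWholePlaneCapacityMap K g cap) (h0 : (0 : ℂ) ∈ K) (hz : z ∈ ball 0 1)
    (hz0 : z ≠ 0) : diskMap K g z ≠ 0 := fun h =>
  hz0 (by rw [← hg.invertedMap_diskMap h0 hz, h, invertedMap_zero])

lemma inv_diskMap_notMem (hg : IsWholePlaneCapacityMap K g cap) (h0 : (0 : ℂ) ∈ K)
    (hz : z ∈ ball 0 1) (hz0 : z ≠ 0) : (diskMap K g z)⁻¹ ∉ K :=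
  (mem_invertedCompl_of_ne (hg.diskMap_ne_zero h0 hz hz0)).1 (hg.diskMap_mem h0 hz)

lemma diskMap_inv_map (hg : IsWholePlaneCapacityMap K g cap) (h0 : (0 : ℂ) ∈ K) (hw : w ∉ K) :
    diskMap K g (g w)⁻¹ = w⁻¹ := by
  have hw0 : w⁻¹ ≠ 0 := inv_ne_zero fun h => hw (h ▸ h0)
  simpa [invertedMap_of_ne hw0] using
    hg.diskMap_invertedMap ((mem_invertedCompl_of_ne hw0).2 (by rwa [inv_inv]))

lemma differentiableOn_diskMap (hg : IsWholePlaneCapacityMap K g cap) (hK : IsCompact K)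
    (h0 : (0 : ℂ) ∈ K) : DifferentiableOn ℂ (diskMap K g) (ball 0 1) := by
  rw [← hg.image_invertedMap h0]
  exact differentiableOn_invFunOn (isOpen_invertedCompl hK)
    (hg.differentiableOn_invertedMap hK.isClosed) hg.injOn_invertedMap

lemma deriv_diskMap_zero (hg : IsWholePlaneCapacityMap K g cap) (hK : IsCompact K) :
    deriv (diskMap K g) 0 = (Real.exp cap : ℂ)⁻¹ := by
  have h := hasDerivAt_invFunOn (isOpen_invertedCompl hK)
    (hg.differentiableOn_invertedMap hK.isClosed) hg.injOn_invertedMap (zero_mem_invertedCompl K)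
  rw [invertedMap_zero, hg.hasDerivAt_invertedMap_zero.deriv] at h
  exact h.deriv

lemma norm_deriv_diskMap_zero (hg : IsWholePlaneCapacityMap K g cap) (hK : IsCompact K) :
    ‖deriv (diskMap K g) 0‖ = (Real.exp cap)⁻¹ := by
  rw [hg.deriv_diskMap_zero hK, norm_inv, Complex.norm_real,
    Real.norm_of_nonneg (Real.exp_pos _).le]

/-! #### Capacity and size -/

theorem subset_closedBall (hg : IsWholePlaneCapacityMap K g cap) (hK : IsCompact K)
    (h0 : (0 : ℂ) ∈ K) : K ⊆ closedBall 0 (192 * Real.exp cap) := by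
  intro z hz
  rw [mem_closedBall_zero_iff]
  rcases eq_or_ne z 0 with rfl | hz0
  · simp only [norm_zero]
    positivity
  have hnot : z⁻¹ ∉ diskMap K g '' ball 0 1 := by
    rintro ⟨v, hv, hvz⟩
    have hv0 : v ≠ 0 := by
      rintro rfl
      exact inv_ne_zero hz0 (hvz ▸ hg.diskMap_zero)
    exact hg.inv_diskMap_notMem h0 hv hv0 (by rwa [hvz, inv_inv])
  have hfar := mt (@ball_subset_image_of_injOn _ _ _ (hg.differentiableOn_diskMap hK h0)
    (hg.injOn_diskMap h0) z⁻¹) hnot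
  rw [hg.diskMap_zero, hg.norm_deriv_diskMap_zero hK, mem_ball_zero_iff, not_lt, norm_inv, mul_one,
    div_eq_mul_inv, ← mul_inv, inv_le_inv₀ (by positivity) (norm_pos_iff.2 hz0)] at hfar
  linarith

theorem exp_cap_le (hg : IsWholePlaneCapacityMap K g cap) (hK : IsClosed K) (h0 : (0 : ℂ) ∈ K)
    {s : ℝ} (hs : 0 < s) (hKs : K ⊆ closedBall 0 s) : Real.exp cap ≤ s := by
  have hsub : ball 0 (1 / s) ⊆ invertedCompl K := by
    intro u hu
    rcases eq_or_ne u 0 with rfl | hu0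
    · exact zero_mem_invertedCompl K
    refine (mem_invertedCompl_of_ne hu0).2 fun huK => ?_
    have hle := mem_closedBall_zero_iff.1 (hKs huK)
    rw [norm_inv, inv_le_comm₀ (norm_pos_iff.2 hu0) hs] at hle
    rw [mem_ball_zero_iff, one_div] at hu
    exact hu.not_ge hle
  have hmaps : MapsTo (invertedMap g) (ball 0 (1 / s)) (closedBall (invertedMap g 0) 1) := by
    intro u hu
    rw [invertedMap_zero]
    exact ball_subset_closedBall ((hg.image_invertedMap h0).subset (mem_image_of_mem _ (hsub hu)))
  have hschwarz := Complex.norm_deriv_le_div_of_mapsTo_ball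
    ((hg.differentiableOn_invertedMap hK).mono hsub) hmaps (by positivity)
  rwa [hg.hasDerivAt_invertedMap_zero.deriv, Complex.norm_real,
    Real.norm_of_nonneg (Real.exp_pos _).le, one_div_one_div] at hschwarz

lemma norm_le_mul_norm_diskMap (hg : IsWholePlaneCapacityMap K g cap) (hK : IsCompact K)
    (h0 : (0 : ℂ) ∈ K) (hz : z ∈ ball 0 1) : ‖z‖ ≤ 192 * Real.exp cap * ‖diskMap K g z‖ := by
  have hle := norm_deriv_mul_dist_le_of_injOn (hg.differentiableOn_diskMap hK h0)
    (hg.injOn_diskMap h0) hz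
  rw [hg.norm_deriv_diskMap_zero hK, hg.diskMap_zero, dist_zero_right, dist_zero_right,
    inv_mul_le_iff₀ (Real.exp_pos _)] at hle
  linarith

lemma norm_inv_diskMap_le (hg : IsWholePlaneCapacityMap K g cap) (hK : IsCompact K)
    (h0 : (0 : ℂ) ∈ K) (hz : z ∈ ball 0 1) : ‖(diskMap K g z)⁻¹‖ ≤ 192 * Real.exp cap / ‖z‖ := by
  refine (norm_inv_le_of_injOn (hg.differentiableOn_diskMap hK h0) (hg.injOn_diskMap h0)
    hg.diskMap_zero hz).trans_eq ?_
  rw [hg.norm_deriv_diskMap_zero hK, ← div_div, div_inv_eq_mul]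

/-! #### Boundary behaviour -/

theorem tendsto_inv_diskMap (hg : IsWholePlaneCapacityMap K g cap) (hK : IsClosed K)
    (h0 : (0 : ℂ) ∈ K) :
    Tendsto (fun z => (diskMap K g z)⁻¹) (comap norm (𝓝[<] 1)) (𝓝ˢ[Kᶜ] K) := by
  have hdisc : ∀ᶠ s in 𝓝[<] (1 : ℝ), s ∈ Ioo 0 1 := Ioo_mem_nhdsLT one_pos
  refine tendsto_inf.2 ⟨fun t ht => ?_, ?_⟩
  · obtain ⟨v, hv, hKv, hvt⟩ := mem_nhdsSet_iff_exists.1 ht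
    have hsub : invertedCompl v ⊆ invertedCompl K :=
      insert_subset_insert fun u hu hu' => hu (hKv hu')
    have himage : IsCompact (invertedMap g '' invertedCompl v) :=
      (isCompact_invertedCompl hv (hKv h0)).image_of_continuousOn
        ((hg.differentiableOn_invertedMap hK).continuousOn.mono hsub)
    obtain ⟨p, hp, hball⟩ := exists_lt_subset_ball himage.isClosed
      ((image_mono hsub).trans (hg.image_invertedMap h0).subset)
    refine mem_map.2 ?_
    filter_upwards [preimage_mem_comap (inter_mem hdisc (Ioo_mem_nhdsLT hp))]
    rintro z ⟨hz, hpz⟩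
    by_contra hzt
    refine (mem_ball_zero_iff.1 (hball ⟨diskMap K g z, ?_, ?_⟩)).not_gt hpz.1
    · exact Or.inr fun h => hzt (hvt h)
    · exact hg.invertedMap_diskMap h0 (mem_ball_zero_iff.2 hz.2)
  · rw [tendsto_principal]
    filter_upwards [preimage_mem_comap hdisc] with z hz
    exact hg.inv_diskMap_notMem h0 (mem_ball_zero_iff.2 hz.2) (norm_pos_iff.1 hz.1)

theorem tendsto_norm_inv (hg : IsWholePlaneCapacityMap K g cap) (hK : IsCompact K)
    (h0 : (0 : ℂ) ∈ K) : Tendsto (fun w => ‖(g w)⁻¹‖) (𝓝ˢ[Kᶜ] K) (𝓝[<] 1) := by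
  rw [(nhdsLT_basis (1 : ℝ)).tendsto_right_iff]
  intro p hp
  have hsub : closedBall (0 : ℂ) p ⊆ ball 0 1 := closedBall_subset_ball hp
  have himage : IsCompact (diskMap K g '' closedBall 0 p) :=
    (isCompact_closedBall 0 p).image_of_continuousOn
      ((hg.differentiableOn_diskMap hK h0).continuousOn.mono hsub)
  refine mem_nhdsSetWithin.2 ⟨_, isOpen_invertedCompl himage, fun w hw => ?_, ?_⟩
  · rcases eq_or_ne w 0 with rfl | hw0
    · exact zero_mem_invertedCompl _
    rw [mem_invertedCompl_of_ne hw0]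
    rintro ⟨z, hz, hzw⟩
    have hwU := hg.diskMap_mem h0 (hsub hz)
    rw [hzw, mem_invertedCompl_of_ne (inv_ne_zero hw0), inv_inv] at hwU
    exact hwU hw
  · rintro w ⟨hw, hwK⟩
    have hw0 : w ≠ 0 := fun h => hwK (h ▸ h0)
    refine ⟨not_le.1 fun hle => ?_, ?_⟩
    · exact (mem_invertedCompl_of_ne hw0).1 hw
        ⟨(g w)⁻¹, mem_closedBall_zero_iff.2 hle, hg.diskMap_inv_map h0 hwK⟩
    · rw [norm_inv]
      exact inv_lt_one_of_one_lt₀ (hg.one_lt_norm hwK)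

end IsWholePlaneCapacityMap

/-! ### Comparing the capacity maps of a hull and its image -/

lemma tendsto_nhdsSetWithin_compl_image {U K : Set ℂ} {W : ℂ → ℂ} (hU : IsOpen U)
    (hW : ContinuousOn W U) (hinj : InjOn W U) (hKU : K ⊆ U) :
    Tendsto W (𝓝ˢ[Kᶜ] K) (𝓝ˢ[(W '' K)ᶜ] (W '' K)) := by
  have hUK : U ∈ 𝓝ˢ K := hU.mem_nhdsSet.2 hKU
  refine tendsto_inf.2 ⟨(hW.tendsto_nhdsSet hUK (mapsTo_image W K)).mono_left inf_le_left, ?_⟩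
  rw [tendsto_principal]
  filter_upwards [mem_inf_of_left hUK, mem_inf_of_right (mem_principal_self Kᶜ)] with w hwU hwK
  exact fun h => hwK ((hinj.mem_image_iff hKU hwU).1 h)

/-- The data to which the comparison applies: a hull `K ∋ 0` inside a disc about `0` on which `W` is
univalent and fixes `0`, together with capacity maps `g` of `K` and `g'` of `W '' K`. -/
structure IsHullTransport (W : ℂ → ℂ) (δ : ℝ) (K : Set ℂ) (g g' : ℂ → ℂ) (cap cap' : ℝ) :
    Prop where
  differentiableOn : DifferentiableOn ℂ W (ball 0 δ)
  injOn : InjOn W (ball 0 δ)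
  map_zero : W 0 = 0
  isCompact : IsCompact K
  zero_mem : (0 : ℂ) ∈ K
  subset_ball : K ⊆ ball 0 δ
  source : IsWholePlaneCapacityMap K g cap
  target : IsWholePlaneCapacityMap (W '' K) g' cap'

/-- The transition map `g_{W(K)} ∘ W ∘ g_K⁻¹` read in the coordinate `1 / z` at `∞`. It is defined
near the unit circle, which it carries to itself. -/
noncomputable def transitionMap (K : Set ℂ) (W g g' : ℂ → ℂ) (z : ℂ) : ℂ :=
  (g' (W (diskMap K g z)⁻¹))⁻¹

namespace IsHullTransport

variable {W g g' : ℂ → ℂ} {δ cap cap' : ℝ} {K : Set ℂ} {z : ℂ}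

lemma pos (h : IsHullTransport W δ K g g' cap cap') : 0 < δ :=
  pos_of_mem_ball (h.subset_ball h.zero_mem)

lemma norm_deriv_pos (h : IsHullTransport W δ K g g' cap cap') : 0 < ‖deriv W 0‖ :=
  norm_pos_iff.2 (deriv_ne_zero_of_injOn isOpen_ball h.differentiableOn h.injOn
    (mem_ball_self h.pos))

lemma isCompact_image (h : IsHullTransport W δ K g g' cap cap') : IsCompact (W '' K) :=
  h.isCompact.image_of_continuousOn (h.differentiableOn.continuousOn.mono h.subset_ball)

lemma zero_mem_image (h : IsHullTransport W δ K g g' cap cap') : (0 : ℂ) ∈ W '' K :=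
  ⟨0, h.zero_mem, h.map_zero⟩

theorem tendsto_norm_transitionMap (h : IsHullTransport W δ K g g' cap cap') :
    Tendsto (fun z => ‖transitionMap K W g g' z‖) (comap norm (𝓝[<] 1)) (𝓝[<] 1) :=
  (h.target.tendsto_norm_inv h.isCompact_image h.zero_mem_image).comp <|
    (tendsto_nhdsSetWithin_compl_image isOpen_ball h.differentiableOn.continuousOn h.injOn
      h.subset_ball).comp (h.source.tendsto_inv_diskMap h.isCompact.isClosed h.zero_mem)

lemma map_inv_diskMap_notMem (h : IsHullTransport W δ K g g' cap cap') (hz : z ∈ ball 0 1)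
    (hz0 : z ≠ 0) (hzδ : (diskMap K g z)⁻¹ ∈ ball 0 δ) : W (diskMap K g z)⁻¹ ∉ W '' K := fun hmem =>
  h.source.inv_diskMap_notMem h.zero_mem hz hz0
    ((h.injOn.mem_image_iff h.subset_ball hzδ).1 hmem)

lemma transitionMap_mem_ball (h : IsHullTransport W δ K g g' cap cap') (hz : z ∈ ball 0 1)
    (hz0 : z ≠ 0) (hzδ : (diskMap K g z)⁻¹ ∈ ball 0 δ) : transitionMap K W g g' z ∈ ball 0 1 := by
  rw [transitionMap, mem_ball_zero_iff, norm_inv]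
  exact inv_lt_one_of_one_lt₀ (h.target.one_lt_norm (h.map_inv_diskMap_notMem hz hz0 hzδ))

lemma diskMap_transitionMap (h : IsHullTransport W δ K g g' cap cap') (hz : z ∈ ball 0 1)
    (hz0 : z ≠ 0) (hzδ : (diskMap K g z)⁻¹ ∈ ball 0 δ) :
    diskMap (W '' K) g' (transitionMap K W g g' z) = (W (diskMap K g z)⁻¹)⁻¹ :=
  h.target.diskMap_inv_map h.zero_mem_image (h.map_inv_diskMap_notMem hz hz0 hzδ)

lemma differentiableAt_inv_diskMap (h : IsHullTransport W δ K g g' cap cap') (hz : z ∈ ball 0 1)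
    (hz0 : z ≠ 0) : DifferentiableAt ℂ (fun z => (diskMap K g z)⁻¹) z :=
  ((h.source.differentiableOn_diskMap h.isCompact h.zero_mem).differentiableAt
    (isOpen_ball.mem_nhds hz)).fun_inv (h.source.diskMap_ne_zero h.zero_mem hz hz0)

lemma differentiableAt_transitionMap (h : IsHullTransport W δ K g g' cap cap')
    (hz : z ∈ ball 0 1) (hz0 : z ≠ 0) (hzδ : (diskMap K g z)⁻¹ ∈ ball 0 δ) :
    DifferentiableAt ℂ (transitionMap K W g g') z := by
  have hnot := h.map_inv_diskMap_notMem hz hz0 hzδ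
  have hW := (h.differentiableOn.differentiableAt (isOpen_ball.mem_nhds hzδ)).comp z
    (h.differentiableAt_inv_diskMap hz hz0)
  exact ((h.target.differentiableAt h.isCompact_image.isClosed hnot).comp z hW).fun_inv
    (h.target.map_ne_zero hnot)

theorem transitionMap_eq_mul_exp (h : IsHullTransport W δ K g g' cap cap') {l lW l' : ℂ → ℂ}
    (hl : IsDistortionLog (diskMap K g) l 1) (hlW : IsDistortionLog W lW δ)
    (hl' : IsDistortionLog (diskMap (W '' K) g') l' 1) (hz : z ∈ ball 0 1) (hz0 : z ≠ 0)
    (hzδ : (diskMap K g z)⁻¹ ∈ ball 0 δ) :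
    transitionMap K W g g' z = (Real.exp cap' : ℂ) / (deriv W 0 * Real.exp cap) * z *
      Complex.exp (l z - lW (diskMap K g z)⁻¹ - l' (transitionMap K W g g' z)) := by
  have hF := hl.eq_mul_exp z hz
  have hV := hl'.eq_mul_exp _ (h.transitionMap_mem_ball hz hz0 hzδ)
  rw [h.diskMap_transitionMap hz hz0 hzδ, hlW.eq_mul_exp _ hzδ,
    h.target.deriv_diskMap_zero h.isCompact_image, mul_inv, mul_inv, inv_inv] at hV
  rw [h.source.deriv_diskMap_zero h.isCompact] at hF
  have hr' : (Real.exp cap' : ℂ) ≠ 0 := Complex.ofReal_ne_zero.2 (Real.exp_pos _).ne'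
  have hd := norm_pos_iff.1 h.norm_deriv_pos
  calc transitionMap K W g g' z
      = Real.exp cap' * ((Real.exp cap' : ℂ)⁻¹ * transitionMap K W g g' z *
          Complex.exp (l' (transitionMap K W g g' z))) /
          Complex.exp (l' (transitionMap K W g g' z)) := by field_simp
    _ = _ := by
      rw [← hV, Complex.exp_sub, Complex.exp_sub]
      nth_rewrite 1 [hF]
      field_simp

lemma log_norm_transitionMap_sub (h : IsHullTransport W δ K g g' cap cap') (hz0 : z ≠ 0) {b : ℂ}
    (hb : transitionMap K W g g' z =
      (Real.exp cap' : ℂ) / (deriv W 0 * Real.exp cap) * z * Complex.exp b) :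
    Real.log ‖transitionMap K W g g' z‖ - Real.log ‖z‖ =
      cap' - cap - Real.log ‖deriv W 0‖ + b.re := by
  have hd := h.norm_deriv_pos.ne'
  rw [hb, norm_mul, norm_mul, norm_div, norm_mul, Complex.norm_real, Complex.norm_real,
    Real.norm_of_nonneg (Real.exp_pos _).le, Real.norm_of_nonneg (Real.exp_pos _).le,
    Complex.norm_exp, Real.log_mul (by positivity) (by positivity),
    Real.log_mul (by positivity) (by positivity), Real.log_div (by positivity) (by positivity),
    Real.log_mul hd (by positivity), Real.log_exp, Real.log_exp, Real.log_exp]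
  ring

theorem tendsto_log_norm_transitionMap_sub (h : IsHullTransport W δ K g g' cap cap') :
    Tendsto (fun z => Real.log ‖transitionMap K W g g' z‖ - Real.log ‖z‖)
      (comap norm (𝓝[<] 1)) (𝓝 0) := by
  have hlog : Tendsto Real.log (𝓝[<] 1) (𝓝 0) := by
    simpa using (Real.continuousAt_log one_ne_zero).tendsto.mono_left nhdsWithin_le_nhds
  simpa using (hlog.comp h.tendsto_norm_transitionMap).sub (hlog.comp tendsto_comap)

/-! #### Estimates on the inner circle -/

lemma exp_cap_image_le (h : IsHullTransport W δ K g g' cap cap')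
    (hδ : 192 * Real.exp cap ≤ δ / 386) : Real.exp cap' ≤ 576 * ‖deriv W 0‖ * Real.exp cap := by
  have hd := h.norm_deriv_pos
  refine h.target.exp_cap_le h.isCompact_image.isClosed h.zero_mem_image (by positivity) ?_
  rintro _ ⟨w, hw, rfl⟩
  have hwK := mem_closedBall_zero_iff.1 (h.source.subset_closedBall h.isCompact h.zero_mem hw)
  rw [mem_closedBall_zero_iff]
  calc ‖W w‖ ≤ 3 * (‖deriv W 0‖ * ‖w‖) := norm_le_three_mul_norm_deriv_mul_norm_of_injOn h.pos
        h.differentiableOn h.injOn h.map_zero (hwK.trans hδ)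
    _ ≤ 3 * (‖deriv W 0‖ * (192 * Real.exp cap)) := by gcongr
    _ = 576 * ‖deriv W 0‖ * Real.exp cap := by ring

lemma norm_inv_diskMap_le (h : IsHullTransport W δ K g g' cap cap') (hz : z ∈ ball 0 1)
    (hez : Real.exp (cap / 2) ≤ ‖z‖) : ‖(diskMap K g z)⁻¹‖ ≤ 192 * Real.exp (cap / 2) :=
  calc ‖(diskMap K g z)⁻¹‖ ≤ 192 * Real.exp cap / ‖z‖ :=
        h.source.norm_inv_diskMap_le h.isCompact h.zero_mem hz
    _ ≤ 192 * Real.exp cap / Real.exp (cap / 2) := by gcongr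
    _ = 192 * Real.exp (cap / 2) := by rw [mul_div_assoc, ← Real.exp_sub, sub_half]

lemma norm_transitionMap_le (h : IsHullTransport W δ K g g' cap cap')
    (hδ : 192 * Real.exp cap ≤ δ / 386) (hz : ‖z‖ ≤ 1 / 386) (hz0 : z ≠ 0)
    (hzδ : (diskMap K g z)⁻¹ ∈ ball 0 δ) : ‖transitionMap K W g g' z‖ ≤ 9 * 192 ^ 3 * ‖z‖ := by
  have hz1 : z ∈ ball 0 1 := by rw [mem_ball_zero_iff]; linarith
  have hd := h.norm_deriv_pos
  have hFle := norm_le_three_mul_norm_deriv_mul_norm_of_injOn one_pos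
    (h.source.differentiableOn_diskMap h.isCompact h.zero_mem) (h.source.injOn_diskMap h.zero_mem)
    h.source.diskMap_zero hz
  rw [h.source.norm_deriv_diskMap_zero h.isCompact] at hFle
  have hWle := norm_inv_le_of_injOn h.differentiableOn h.injOn h.map_zero hzδ
  rw [norm_inv (diskMap K g z), ← div_div, div_inv_eq_mul] at hWle
  have hVle := h.target.norm_le_mul_norm_diskMap h.isCompact_image h.zero_mem_image
    (h.transitionMap_mem_ball hz1 hz0 hzδ)
  rw [h.diskMap_transitionMap hz1 hz0 hzδ] at hVle
  calc ‖transitionMap K W g g' z‖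
      ≤ 192 * Real.exp cap' * ‖(W (diskMap K g z)⁻¹)⁻¹‖ := hVle
    _ ≤ 192 * (576 * ‖deriv W 0‖ * Real.exp cap) *
          (192 / ‖deriv W 0‖ * (3 * ((Real.exp cap)⁻¹ * ‖z‖))) := by
        gcongr
        · exact h.exp_cap_image_le hδ
        · exact hWle.trans (by gcongr)
    _ = 9 * 192 ^ 3 * ‖z‖ := by
        field_simp
        ring

lemma inv_diskMap_mem_ball (h : IsHullTransport W δ K g g' cap cap')
    (hδ : 192 * Real.exp (cap / 2) < δ) (hez : Real.exp (cap / 2) ≤ ‖z‖) (hz : z ∈ ball 0 1) :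
    (diskMap K g z)⁻¹ ∈ ball 0 δ :=
  mem_ball_zero_iff.2 ((h.norm_inv_diskMap_le hz hez).trans_lt hδ)

/-! #### The logarithm of the transition map -/

lemma norm_transitionLog_le (h : IsHullTransport W δ K g g' cap cap') {l lW l' : ℂ → ℂ}
    (hl : IsDistortionLog (diskMap K g) l 1) (hlW : IsDistortionLog W lW δ)
    (hl' : IsDistortionLog (diskMap (W '' K) g') l' 1)
    (hone : 18 * 192 ^ 3 * Real.exp (cap / 2) ≤ 1)
    (hδ : 18 * 192 ^ 3 * Real.exp (cap / 2) ≤ δ) (hez : ‖z‖ = Real.exp (cap / 2)) :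
    ‖l z - lW (diskMap K g z)⁻¹ - l' (transitionMap K W g g' z)‖ ≤
      386 * (1 + 192 / δ + 9 * 192 ^ 3) * Real.exp (cap / 2) := by
  have he := Real.exp_pos (cap / 2)
  have hδ0 := h.pos
  have hz : z ∈ ball 0 1 := by rw [mem_ball_zero_iff]; linarith
  have hz0 : z ≠ 0 := norm_pos_iff.1 (hez ▸ he)
  have hx := h.norm_inv_diskMap_le hz hez.ge
  have hcap : 192 * Real.exp cap ≤ δ / 386 := by
    have hsq : Real.exp cap = Real.exp (cap / 2) * Real.exp (cap / 2) := by
      rw [← Real.exp_add, add_halves]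
    nlinarith
  -- The factor `18` makes the resulting bound on the transition map at most `1 / 2`.
  have hV := h.norm_transitionMap_le hcap (by linarith) hz0
    (h.inv_diskMap_mem_ball (by linarith) hez.ge hz)
  rw [hez] at hV
  have hlz := hl.norm_le (h.source.differentiableOn_diskMap h.isCompact h.zero_mem)
    (h.source.injOn_diskMap h.zero_mem) one_pos (z := z) (by linarith)
  have hlx := hlW.norm_le h.differentiableOn h.injOn h.pos (z := (diskMap K g z)⁻¹) (by linarith)
  have hlV := hl'.norm_le (h.target.differentiableOn_diskMap h.isCompact_image h.zero_mem_image)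
    (h.target.injOn_diskMap h.zero_mem_image) one_pos (z := transitionMap K W g g' z) (by linarith)
  rw [hez] at hlz
  calc ‖l z - lW (diskMap K g z)⁻¹ - l' (transitionMap K W g g' z)‖
      ≤ ‖l z‖ + ‖lW (diskMap K g z)⁻¹‖ + ‖l' (transitionMap K W g g' z)‖ :=
        (norm_sub_le _ _).trans (by gcongr; exact norm_sub_le _ _)
    _ ≤ 386 / 1 * Real.exp (cap / 2) + 386 / δ * (192 * Real.exp (cap / 2)) +
          386 / 1 * (9 * 192 ^ 3 * Real.exp (cap / 2)) := by
        gcongr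
        · exact hlx.trans (by gcongr)
        · exact hlV.trans (by gcongr)
    _ = 386 * (1 + 192 / δ + 9 * 192 ^ 3) * Real.exp (cap / 2) := by ring

theorem exists_transitionLog (h : IsHullTransport W δ K g g' cap cap')
    (hone : 18 * 192 ^ 3 * Real.exp (cap / 2) ≤ 1)
    (hδ : 18 * 192 ^ 3 * Real.exp (cap / 2) ≤ δ) :
    ∃ b : ℂ → ℂ, (∀ z, Real.exp (cap / 2) ≤ ‖z‖ → ‖z‖ < 1 → DifferentiableAt ℂ b z ∧
        transitionMap K W g g' z =
          (Real.exp cap' : ℂ) / (deriv W 0 * Real.exp cap) * z * Complex.exp (b z)) ∧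
      ∀ z, ‖z‖ = Real.exp (cap / 2) →
        ‖b z‖ ≤ 386 * (1 + 192 / δ + 9 * 192 ^ 3) * Real.exp (cap / 2) := by
  obtain ⟨l, hl⟩ := exists_isDistortionLog
    (h.source.differentiableOn_diskMap h.isCompact h.zero_mem) (h.source.injOn_diskMap h.zero_mem)
    h.source.diskMap_zero
  obtain ⟨lW, hlW⟩ := exists_isDistortionLog h.differentiableOn h.injOn h.map_zero
  obtain ⟨l', hl'⟩ := exists_isDistortionLog
    (h.target.differentiableOn_diskMap h.isCompact_image h.zero_mem_image)
    (h.target.injOn_diskMap h.zero_mem_image) h.target.diskMap_zero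
  refine ⟨fun z => l z - lW (diskMap K g z)⁻¹ - l' (transitionMap K W g g' z),
    fun z hez hz1 => ?_, fun z => h.norm_transitionLog_le hl hlW hl' hone hδ⟩
  have he := Real.exp_pos (cap / 2)
  have hz : z ∈ ball 0 1 := mem_ball_zero_iff.2 hz1
  have hz0 : z ≠ 0 := norm_pos_iff.1 (he.trans_le hez)
  have hzδ := h.inv_diskMap_mem_ball (by linarith) hez hz
  exact ⟨((hl.differentiableAt hz).sub ((hlW.differentiableAt hzδ).comp z
    (h.differentiableAt_inv_diskMap hz hz0))).sub
      ((hl'.differentiableAt (h.transitionMap_mem_ball hz hz0 hzδ)).comp z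
        (h.differentiableAt_transitionMap hz hz0 hzδ)),
    h.transitionMap_eq_mul_exp hl hlW hl' hz hz0 hzδ⟩

theorem abs_cap_image_sub_le (h : IsHullTransport W δ K g g' cap cap')
    (hone : 18 * 192 ^ 3 * Real.exp (cap / 2) ≤ 1)
    (hδ : 18 * 192 ^ 3 * Real.exp (cap / 2) ≤ δ) :
    |cap' - cap - Real.log ‖deriv W 0‖| ≤
      386 * (1 + 192 / δ + 9 * 192 ^ 3) * Real.exp (cap / 2) := by
  obtain ⟨b, hb, hbound⟩ := h.exists_transitionLog hone hδ
  have he := Real.exp_pos (cap / 2)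
  have he1 : Real.exp (cap / 2) < 1 := by linarith
  rw [← abs_neg]
  refine abs_le_of_tendsto_re_of_differentiableAt_annulus he he1
    (fun z hez hz => (hb z hez hz).1) hbound ?_
  have hlim := h.tendsto_log_norm_transitionMap_sub.sub_const
    (cap' - cap - Real.log ‖deriv W 0‖)
  rw [zero_sub] at hlim
  refine hlim.congr' ?_
  filter_upwards [preimage_mem_comap (Ioo_mem_nhdsLT he1)] with z hz
  rw [h.log_norm_transitionMap_sub (norm_pos_iff.1 (he.trans hz.1)) (hb z hz.1.le hz.2).2,
    add_sub_cancel_left]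

end IsHullTransport

lemma isHullTransport_of_exp_half_cap_le {W g g' : ℂ → ℂ} {δ cap cap' : ℝ} {K : Set ℂ}
    (hW : DifferentiableOn ℂ W (ball 0 δ)) (hWinj : InjOn W (ball 0 δ)) (hW0 : W 0 = 0)
    (hK : IsCompact K) (h0 : (0 : ℂ) ∈ K) (hg : IsWholePlaneCapacityMap K g cap)
    (hg' : IsWholePlaneCapacityMap (W '' K) g' cap') (hone : Real.exp (cap / 2) ≤ 1)
    (hδ : 192 * Real.exp (cap / 2) < δ) : IsHullTransport W δ K g g' cap cap' := by
  refine ⟨hW, hWinj, hW0, hK, h0, ?_, hg, hg'⟩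
  refine (hg.subset_closedBall hK h0).trans (closedBall_subset_ball (lt_of_le_of_lt ?_ hδ))
  gcongr
  linarith [Real.exp_le_one_iff.1 hone]

/-- Let `W` be a conformal map on a domain `Ω ∋ 0` with `W(0) = 0`. There exist constants
`C₁ > 0` and `c < 0` such that for every `ℂ`-hull `K` with `{0} ⊊ K ⊆ Ω` and `cap(K) ≤ c`,
`|cap(W(K)) − cap(K) − log |W'(0)|| ≤ C₁ e^{cap(K)/2}`. -/
theorem capacity_under_conformal_map (Ω : Set ℂ) (W : ℂ → ℂ)
    (hΩ : IsOpen Ω) (hΩ0 : (0 : ℂ) ∈ Ω) (hΩconn : IsConnected Ω)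
    (hW : DifferentiableOn ℂ W Ω) (hWinj : InjOn W Ω) (hW0 : W 0 = 0) :
    ∃ C₁ : ℝ, 0 < C₁ ∧ ∃ c : ℝ, c < 0 ∧
      ∀ (K : Set ℂ) (gK gWK : ℂ → ℂ) (capK capWK : ℝ),
        IsCHull K → ({0} : Set ℂ) ⊂ K → K ⊆ Ω →
        IsWholePlaneCapacityMap K gK capK →
        IsCHull (W '' K) → IsWholePlaneCapacityMap (W '' K) gWK capWK →
        capK ≤ c →
        |capWK - capK - Real.log ‖deriv W 0‖| ≤ C₁ * Real.exp (capK / 2) := by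
  obtain ⟨δ, hδ, hball⟩ := Metric.isOpen_iff.1 hΩ 0 hΩ0
  refine ⟨386 * (1 + 192 / δ + 9 * 192 ^ 3), by positivity,
    2 * Real.log (min 1 δ / (18 * 192 ^ 3)), ?_, ?_⟩
  · have := Real.log_neg (x := min 1 δ / (18 * 192 ^ 3)) (by positivity)
      (by linarith [min_le_left 1 δ])
    linarith
  intro K gK gWK capK capWK hK hK0 _ hgK _ hgWK hcap
  have hsmall : 18 * 192 ^ 3 * Real.exp (capK / 2) ≤ min 1 δ := by
    rw [mul_comm, ← le_div_iff₀ (by positivity), ← Real.le_log_iff_exp_le (by positivity)]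
    linarith
  have hone := hsmall.trans (min_le_left _ _)
  have hsmallδ := hsmall.trans (min_le_right _ _)
  have htransport : IsHullTransport W δ K gK gWK capK capWK :=
    isHullTransport_of_exp_half_cap_le (hW.mono hball) (hWinj.mono hball) hW0 hK.1
      (hK0.subset rfl) hgK hgWK (by linarith) (by linarith [Real.exp_pos (capK / 2)])
  exact htransport.abs_cap_image_sub_le hone hsmallδ
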